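/- (Decomposition theorem) Let G be a bipartite graph with positive integer edge weights, with maximum edge weight N, and let h ∈ [1, N]. Let G_h be the graph on the edges uv of G with w(u,v) ≥ N−h+1, with weights w(u,v)−(N−h). Let C_h be a minimum weight cover of G_h, and let G^Δ_h be the graph on those edges uv of G with w(u,v) − C_h(u) − C_h(v) > 0, with weights w(u,v) − C_h(u) − C_h(v) (where C_h(u) = 0 for nodes not in G_h). Then mwm(G) = mwm(G_h) + mwm(G^Δ_h), where mwm denotes the maximum weight of a matching. -/

import Mathlib

open Finset

variable {V : Type*} [Fintype V] [DecidableEq V]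

/-- `C` is a (weighted vertex) cover of the bipartite graph on parts `X`, `Y`
with edge weights `w` (where `w x y = 0` means no edge). -/
def IsCover (X Y : Finset V) (w : V → V → ℕ) (C : V → ℕ) : Prop :=
  ∀ x ∈ X, ∀ y ∈ Y, w x y ≤ C x + C y

/-- The weight of a cover: the sum of its values over all nodes. -/
def coverWt (X Y : Finset V) (C : V → ℕ) : ℕ := ∑ u ∈ X ∪ Y, C u

/-- `M` is a matching of the weighted bipartite graph: a set of pairwise
node-disjoint edges, each going from `X` to `Y` with positive weight. -/
def IsBMatching (X Y : Finset V) (w : V → V → ℕ) (M : Finset (V × V)) : Prop :=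
  (∀ e ∈ M, e.1 ∈ X ∧ e.2 ∈ Y ∧ 0 < w e.1 e.2) ∧
  (∀ e ∈ M, ∀ f ∈ M, e ≠ f → e.1 ≠ f.1 ∧ e.2 ≠ f.2)

/-- The total weight of a matching. -/
def mWt (w : V → V → ℕ) (M : Finset (V × V)) : ℕ := ∑ e ∈ M, w e.1 e.2

open Classical in
/-- The maximum weight of a matching of the bipartite graph `(X, Y, w)`. -/
noncomputable def mwm (X Y : Finset V) (w : V → V → ℕ) : ℕ :=
  Finset.sup ((Finset.univ : Finset (V × V)).powerset.filter fun M => IsBMatching X Y w M)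
    fun M => mWt w M

/-- The minimum weight of a cover of the bipartite graph `(X, Y, w)`. -/
noncomputable def mwc (X Y : Finset V) (w : V → V → ℕ) : ℕ :=
  sInf {n : ℕ | ∃ C : V → ℕ, IsCover X Y w C ∧ coverWt X Y C = n}

/-!
By weak duality and the König–Egerváry theorem, `mwm` is the minimum weight of a cover. Let `D` be a
minimum cover of `w - K`. Adding a cover of the residual graph to `D` gives a cover of `w`, whence
`≤`. For `≥`, clamp the values of a cover `C` of `w` into `[D, D + K]`. The result is again a cover
of `w`, and it weighs no more than `C`: the weight gained equals the total weight lost when `D` is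
replaced by two covers of `w - K`, one taking the smaller values on `X` and the larger ones on `Y`,
the other one the reverse. Subtracting `D` from the clamped cover leaves a cover of the residual
graph.

The König–Egerváry theorem follows from Hall's theorem on the tight edges of minimum potentials of
a square matrix: a set violating Hall's condition would allow the potentials to be lowered.
-/

section Egervary

variable {α β : Type*} [Fintype α] [Fintype β] {w : α → β → ℕ} {u : α → ℕ} {v : β → ℕ}
  {S : Finset α} {T : Finset β}

lemma exists_potentials_sum_lt_of_pos (huv : ∀ i j, w i j ≤ u i + v j) (hpos : ∀ i ∈ S, 0 < u i)
    (hslack : ∀ i ∈ S, ∀ j ∉ T, w i j < u i + v j) (hcard : #T < #S) :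
    ∃ (u' : α → ℕ) (v' : β → ℕ), (∀ i j, w i j ≤ u' i + v' j) ∧
      ∑ i, u' i + ∑ j, v' j < ∑ i, u i + ∑ j, v j := by
  classical
  refine ⟨fun i => u i - if i ∈ S then 1 else 0, fun j => v j + if j ∈ T then 1 else 0,
    by grind, ?_⟩
  have hS : ∑ i, (if i ∈ S then 1 else 0) ≤ ∑ i, u i := sum_le_sum (by grind)
  rw [sum_tsub_distrib _ (by grind), sum_add_distrib]
  simp only [Fintype.sum_ite_mem, ← card_eq_sum_ones] at hS ⊢
  omega

lemma exists_potentials_sum_lt (hαβ : Fintype.card α = Fintype.card β)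
    (huv : ∀ i j, w i j ≤ u i + v j) (hslack : ∀ i ∈ S, ∀ j ∉ T, w i j < u i + v j)
    (hcard : #T < #S) :
    ∃ (u' : α → ℕ) (v' : β → ℕ), (∀ i j, w i j ≤ u' i + v' j) ∧
      ∑ i, u' i + ∑ j, v' j < ∑ i, u i + ∑ j, v j := by
  classical
  by_cases hpos : ∀ i ∈ S, 0 < u i
  · exact exists_potentials_sum_lt_of_pos huv hpos hslack hcard
  · -- A zero of `u` on `S` forces `v` to be positive off `T`, so `Tᶜ` and `Sᶜ` can play the roles
    -- of `S` and `T`.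
    obtain ⟨i₀, hi₀, hu₀⟩ : ∃ i ∈ S, u i = 0 := by simpa using hpos
    have hvpos : ∀ j ∈ Tᶜ, 0 < v j := fun j hj => by
      have := hslack i₀ hi₀ j (mem_compl.1 hj)
      omega
    have hslack' : ∀ j ∈ Tᶜ, ∀ i ∉ Sᶜ, w i j < v j + u i := fun j hj i hi =>
      (hslack i (notMem_compl.1 hi) j (mem_compl.1 hj)).trans_eq (add_comm _ _)
    have hcard' : #Sᶜ < #Tᶜ := by
      have := card_le_univ S
      rw [card_compl, card_compl]
      omega
    obtain ⟨v', u', hvu', hlt⟩ := exists_potentials_sum_lt_of_pos (w := fun j i => w i j)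
      (fun j i => (huv i j).trans_eq (add_comm _ _)) hvpos hslack' hcard'
    exact ⟨u', v', fun i j => (hvu' j i).trans_eq (add_comm _ _), by omega⟩

lemma exists_potentials_sum_le (w : α → β → ℕ) :
    ∃ (u : α → ℕ) (v : β → ℕ), (∀ i j, w i j ≤ u i + v j) ∧
      ∀ (u' : α → ℕ) (v' : β → ℕ), (∀ i j, w i j ≤ u' i + v' j) →
        ∑ i, u i + ∑ j, v j ≤ ∑ i, u' i + ∑ j, v' j := by
  obtain ⟨⟨u, v⟩, huv, hmin⟩ := exists_minimalFor_of_wellFoundedLT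
    (fun p : (α → ℕ) × (β → ℕ) => ∀ i j, w i j ≤ p.1 i + p.2 j)
    (fun p => ∑ i, p.1 i + ∑ j, p.2 j)
    ⟨⟨fun i => ∑ j, w i j, 0⟩, fun i j => single_le_sum (by simp) (mem_univ j)⟩
  exact ⟨u, v, huv, fun u' v' huv' => (le_total _ _).elim id (@hmin ⟨u', v'⟩ huv')⟩

/-- Egerváry's theorem for square matrices. -/
theorem exists_potentials_bijective_eq (hαβ : Fintype.card α = Fintype.card β)
    (w : α → β → ℕ) :
    ∃ (u : α → ℕ) (v : β → ℕ) (f : α → β), (∀ i j, w i j ≤ u i + v j) ∧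
      f.Bijective ∧ ∀ i, w i (f i) = u i + v (f i) := by
  classical
  obtain ⟨u, v, huv, hmin⟩ := exists_potentials_sum_le w
  let tight (i : α) : Finset β := {j | w i j = u i + v j}
  have hall : ∀ S : Finset α, #S ≤ #(S.biUnion tight) := by
    intro S
    by_contra! hcard
    have hslack : ∀ i ∈ S, ∀ j ∉ S.biUnion tight, w i j < u i + v j := fun i hi j hj =>
      (huv i j).lt_of_ne fun h => hj (mem_biUnion.2 ⟨i, hi, by simpa [tight] using h⟩)
    obtain ⟨u', v', huv', hlt⟩ := exists_potentials_sum_lt hαβ huv hslack hcard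
    exact (hmin u' v' huv').not_gt hlt
  obtain ⟨f, hf, htight⟩ := (all_card_le_biUnion_card_iff_exists_injective tight).1 hall
  exact ⟨u, v, f, huv, (Fintype.bijective_iff_injective_and_card f).2 ⟨hf, hαβ⟩,
    fun i => (mem_filter.1 (htight i)).2⟩

end Egervary

section Duality

variable {X Y : Finset V} {w : V → V → ℕ} {C : V → ℕ} {M : Finset (V × V)}

omit [Fintype V] in
lemma coverWt_eq_add (hXY : Disjoint X Y) (C : V → ℕ) :
    coverWt X Y C = ∑ x ∈ X, C x + ∑ y ∈ Y, C y :=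
  sum_union hXY

omit [Fintype V] in
lemma mWt_le_coverWt (hXY : Disjoint X Y) (hM : IsBMatching X Y w M) (hC : IsCover X Y w C) :
    mWt w M ≤ coverWt X Y C := by
  obtain ⟨hedge, hdisj⟩ := hM
  have hfst : Set.InjOn Prod.fst (M : Set (V × V)) := fun e he f hf hef =>
    by_contra fun hne => (hdisj e he f hf hne).1 hef
  have hsnd : Set.InjOn Prod.snd (M : Set (V × V)) := fun e he f hf hef =>
    by_contra fun hne => (hdisj e he f hf hne).2 hef
  calc mWt w M ≤ ∑ e ∈ M, (C e.1 + C e.2) :=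
        sum_le_sum fun e he => hC _ (hedge e he).1 _ (hedge e he).2.1
    _ = ∑ x ∈ M.image Prod.fst, C x + ∑ y ∈ M.image Prod.snd, C y := by
        rw [sum_add_distrib, sum_image hfst, sum_image hsnd]
    _ ≤ ∑ x ∈ X, C x + ∑ y ∈ Y, C y := by
        gcongr
        · exact image_subset_iff.2 fun e he => (hedge e he).1
        · exact image_subset_iff.2 fun e he => (hedge e he).2.1
    _ = coverWt X Y C := (coverWt_eq_add hXY C).symm

omit [DecidableEq V] in
lemma mWt_le_mwm (hM : IsBMatching X Y w M) : mWt w M ≤ mwm X Y w := by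
  classical
  exact le_sup (f := mWt w) (by simpa using hM)

lemma mwm_le_coverWt (hXY : Disjoint X Y) (hC : IsCover X Y w C) :
    mwm X Y w ≤ coverWt X Y C := by
  classical
  exact Finset.sup_le fun M hM => mWt_le_coverWt hXY (mem_filter.1 hM).2 hC

lemma sum_ite_mem_le_mwm {f : V → V} (hf : f.Injective) :
    ∑ x, (if x ∈ X ∧ f x ∈ Y then w x (f x) else 0) ≤ mwm X Y w := by
  let E : Finset V := {x | (x ∈ X ∧ f x ∈ Y) ∧ 0 < w x (f x)}
  have hgraph : Function.Injective fun x => (x, f x) := fun _ _ h => congrArg Prod.fst h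
  have hM : IsBMatching X Y w (E.image fun x => (x, f x)) := by
    constructor
    · simp only [forall_mem_image]
      exact fun x hx => by simpa [E, and_assoc] using hx
    · simp +contextual [hf.eq_iff]
  calc ∑ x, (if x ∈ X ∧ f x ∈ Y then w x (f x) else 0)
      = mWt w (E.image fun x => (x, f x)) := by
        rw [mWt, sum_image hgraph.injOn, sum_filter]
        exact sum_congr rfl (by grind)
    _ ≤ mwm X Y w := mWt_le_mwm hM

/-- The König–Egerváry theorem. -/
theorem exists_isCover_coverWt_eq_mwm (hXY : Disjoint X Y) (w : V → V → ℕ) :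
    ∃ C : V → ℕ, IsCover X Y w C ∧ coverWt X Y C = mwm X Y w := by
  obtain ⟨u, v, f, huv, hf, htight⟩ :=
    exists_potentials_bijective_eq rfl fun x y => if x ∈ X ∧ y ∈ Y then w x y else 0
  let C : V → ℕ := fun z => if z ∈ X then u z else v z
  have hCX : ∀ x ∈ X, C x = u x := fun x hx => if_pos hx
  have hCY : ∀ y ∈ Y, C y = v y := fun y hy => if_neg (disjoint_right.1 hXY hy)
  have hC : IsCover X Y w C := fun x hx y hy => by
    simpa only [hCX x hx, hCY y hy, hx, hy, and_self, if_true] using huv x y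
  refine ⟨C, hC, le_antisymm ?_ (mwm_le_coverWt hXY hC)⟩
  calc coverWt X Y C = ∑ x ∈ X, u x + ∑ y ∈ Y, v y := by
        rw [coverWt_eq_add hXY, sum_congr rfl hCX, sum_congr rfl hCY]
    _ ≤ ∑ x, u x + ∑ y, v y := by gcongr <;> exact subset_univ _
    _ = ∑ x, (u x + v (f x)) := by rw [sum_add_distrib, hf.sum_comp v]
    _ = ∑ x, (if x ∈ X ∧ f x ∈ Y then w x (f x) else 0) := by simp only [htight]
    _ ≤ mwm X Y w := sum_ite_mem_le_mwm hf.injective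

end Duality

/-- Minimum weight covers, as in the definition of `C_h`. -/
structure IsMinCover (X Y : Finset V) (w : V → V → ℕ) (C : V → ℕ) : Prop where
  isCover : IsCover X Y w C
  coverWt_le : ∀ C' : V → ℕ, IsCover X Y w C' → coverWt X Y C ≤ coverWt X Y C'

section Decomposition

variable {X Y : Finset V} {w : V → V → ℕ} {C D : V → ℕ} {K : ℕ}

lemma IsMinCover.mwm_eq_coverWt (hXY : Disjoint X Y) (hD : IsMinCover X Y w D) :
    mwm X Y w = coverWt X Y D := by
  obtain ⟨C, hC, hCw⟩ := exists_isCover_coverWt_eq_mwm hXY w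
  exact le_antisymm (mwm_le_coverWt hXY hD.isCover) (hCw ▸ hD.coverWt_le C hC)

omit [Fintype V] [DecidableEq V] in
lemma IsCover.clamp (hC : IsCover X Y w C) (hD : IsCover X Y (fun x y => w x y - K) D) :
    IsCover X Y w fun u => max (D u) (min (C u) (D u + K)) := fun x hx y hy => by
  have hCxy := hC x hx y hy
  have hDxy := hD x hx y hy
  dsimp only at hDxy ⊢
  omega

omit [Fintype V] in
lemma IsCover.exchange (hC : IsCover X Y w C) (hD : IsCover X Y (fun x y => w x y - K) D)
    {S : Finset V} (hS : ∀ x ∈ X, ∀ y ∈ Y, x ∈ S ↔ y ∉ S) :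
    IsCover X Y (fun x y => w x y - K)
      fun u => if u ∈ S then min (C u) (D u) else max (C u - K) (D u) := fun x hx y hy => by
  have hCxy := hC x hx y hy
  have hDxy := hD x hx y hy
  have hSxy := hS x hx y hy
  dsimp only at hDxy ⊢
  split_ifs <;> first | omega | tauto

omit [Fintype V] in
lemma IsMinCover.coverWt_clamp_le (hXY : Disjoint X Y) (hC : IsCover X Y w C)
    (hD : IsMinCover X Y (fun x y => w x y - K) D) :
    coverWt X Y (fun u => max (D u) (min (C u) (D u + K))) ≤ coverWt X Y C := by
  have hX := hD.coverWt_le _ (hC.exchange hD.isCover (S := X) fun x hx y hy =>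
    iff_of_true hx (disjoint_right.1 hXY hy))
  have hY := hD.coverWt_le _ (hC.exchange hD.isCover (S := Y) fun x hx y hy =>
    iff_of_false (disjoint_left.1 hXY hx) (not_not_intro hy))
  have hbalance : coverWt X Y (fun u => max (D u) (min (C u) (D u + K))) +
      (coverWt X Y (fun u => if u ∈ X then min (C u) (D u) else max (C u - K) (D u)) +
        coverWt X Y (fun u => if u ∈ Y then min (C u) (D u) else max (C u - K) (D u))) =
      coverWt X Y C + (coverWt X Y D + coverWt X Y D) := by
    simp only [coverWt, ← sum_add_distrib]
    refine sum_congr rfl fun u hu => ?_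
    have hu_iff : u ∈ X ↔ u ∉ Y :=
      ⟨fun hx => disjoint_left.1 hXY hx, (mem_union.1 hu).resolve_right⟩
    simp only [hu_iff]
    split_ifs <;> omega
  omega

omit [Fintype V] [DecidableEq V] in
lemma IsCover.add_of_residual (hC : IsCover X Y (fun x y => w x y - D x - D y) C) :
    IsCover X Y w (D + C) := fun x hx y hy => by
  have hCxy := hC x hx y hy
  simp only [Pi.add_apply] at hCxy ⊢
  omega

omit [Fintype V] [DecidableEq V] in
lemma IsCover.sub (hC : IsCover X Y w C) (D : V → ℕ) :
    IsCover X Y (fun x y => w x y - D x - D y) (C - D) := fun x hx y hy => by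
  have hCxy := hC x hx y hy
  simp only [Pi.sub_apply]
  omega

omit [Fintype V] in
lemma coverWt_add (X Y : Finset V) (C D : V → ℕ) :
    coverWt X Y (C + D) = coverWt X Y C + coverWt X Y D :=
  sum_add_distrib

theorem decomposition_general (hXY : Disjoint X Y)
    (hD : IsMinCover X Y (fun x y => w x y - K) D) :
    mwm X Y w = mwm X Y (fun x y => w x y - K) + mwm X Y (fun x y => w x y - D x - D y) := by
  rw [hD.mwm_eq_coverWt hXY]
  apply le_antisymm
  · obtain ⟨R, hR, hRw⟩ := exists_isCover_coverWt_eq_mwm hXY fun x y => w x y - D x - D y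
    rw [← hRw, ← coverWt_add]
    exact mwm_le_coverWt hXY hR.add_of_residual
  · obtain ⟨C, hC, hCw⟩ := exists_isCover_coverWt_eq_mwm hXY w
    let C' : V → ℕ := fun u => max (D u) (min (C u) (D u + K))
    have hDC' : D ≤ C' := fun u => le_max_left _ _
    calc coverWt X Y D + mwm X Y (fun x y => w x y - D x - D y)
        ≤ coverWt X Y D + coverWt X Y (C' - D) := by
          gcongr
          exact mwm_le_coverWt hXY ((hC.clamp hD.isCover).sub D)
      _ = coverWt X Y C' := by rw [← coverWt_add, add_tsub_cancel_of_le hDC']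
      _ ≤ coverWt X Y C := hD.coverWt_clamp_le hXY hC
      _ = mwm X Y w := hCw

end Decomposition

/-- The decomposition theorem: `mwm(G) = mwm(G_h) + mwm(G_h^Δ)`, where `G_h`
consists of the edges of weight at least `N - h + 1` (reduced by `N - h`),
`C_h` is a minimum weight cover of `G_h`, and `G_h^Δ` is the residual graph
with weights `w(u,v) - C_h(u) - C_h(v)` (truncated at 0). -/
theorem decomposition
    (X Y : Finset V) (hXY : Disjoint X Y) (w : V → V → ℕ) (N h : ℕ)
    (hwN : ∀ x ∈ X, ∀ y ∈ Y, w x y ≤ N) (hNmax : ∃ x ∈ X, ∃ y ∈ Y, w x y = N)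
    (h1 : 1 ≤ h) (hN : h ≤ N)
    (Ch : V → ℕ)
    (hCh : IsCover X Y (fun x y => w x y - (N - h)) Ch)
    (hChmin : ∀ C' : V → ℕ, IsCover X Y (fun x y => w x y - (N - h)) C' →
      coverWt X Y Ch ≤ coverWt X Y C')
    (hKE : ∀ w' : V → V → ℕ, ∃ (C : V → ℕ) (M : Finset (V × V)),
      IsCover X Y w' C ∧ IsBMatching X Y w' M ∧ mWt w' M = coverWt X Y C) :
    mwm X Y w =
      mwm X Y (fun x y => w x y - (N - h)) +
      mwm X Y (fun x y => w x y - Ch x - Ch y) :=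
  decomposition_general hXY ⟨hCh, hChmin⟩
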